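/- Let D = 2r be an even integer with r ≥ 1 and let n ≥ D+1 be an integer. Then σ̃_{2,max}(D,n) = 2/D = 1/r. -/

import Mathlib

open scoped BigOperators
open Classical

/-- The Dirichlet energy of a function on a finite graph: `∑_{edges xy} (f x - f y)^2`. -/
noncomputable def dirichletEnergy {V : Type*} [Fintype V] (G : SimpleGraph V) (f : V → ℝ) : ℝ :=
  (∑ x : V, ∑ y : V, if G.Adj x y then (f x - f y) ^ 2 else 0) / 2

/-- The `k`-th Steklov (Dirichlet-to-Neumann) eigenvalue (1-indexed, in increasing order
with multiplicity) of a finite graph `G` with boundary `B`, via the variational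
(Courant–Fischer) characterization. -/
noncomputable def steklovEig {V : Type*} [Fintype V] (G : SimpleGraph V) (B : Finset V)
    (k : ℕ) : ℝ :=
  sInf { t : ℝ | ∃ F : Submodule ℝ (V → ℝ),
    Module.finrank ℝ (F.map (LinearMap.funLeft ℝ ℝ (fun x : {v // v ∈ B} => (x : V)))) = k ∧
    ∀ f ∈ F, dirichletEnergy G f ≤ t * ∑ x ∈ B, (f x) ^ 2 }

/-- The set of leaves (vertices of degree 1) of a finite graph, as a `Finset`. -/
noncomputable def leavesFinset {V : Type*} [Fintype V] (G : SimpleGraph V) : Finset V :=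
  Finset.univ.filter fun v => G.degree v = 1

/-- `σ_{k,max}(b,n)`: the maximum of the `k`-th Steklov eigenvalue over all trees with
`b` leaves (as boundary) and `n` vertices. -/
noncomputable def sigmaMax (k b n : ℕ) : ℝ :=
  sSup { s : ℝ | ∃ G : SimpleGraph (Fin n), G.IsTree ∧ (leavesFinset G).card = b ∧
    s = steklovEig G (leavesFinset G) k }

/-- `σ̃_{2,max}(D,n)`: the maximum of the first nontrivial Steklov eigenvalue over all
trees with diameter `D` and `n` vertices. -/
noncomputable def sigmaTildeMax (D n : ℕ) : ℝ :=
  sSup { s : ℝ | ∃ G : SimpleGraph (Fin n), G.IsTree ∧ G.diam = D ∧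
    s = steklovEig G (leavesFinset G) 2 }

/-!
On a tree the Gromov product `(x | ·)_c` based at a vertex `c` is the Green function of the
Laplacian grounded at `c`: its Laplacian is `δ_x - δ_c`. If `c` lies between any two points of a
set `S`, the products `(x | ·)_c` with `x ∈ S` are therefore orthogonal for the Dirichlet energy,
and a combination `h` of them has energy `∑ x ∈ S, h(x)² / d(c, x)`.

In a tree of diameter `2r`, taking for `S` the two ends of a diameter and for `c` its midpoint
gives a plane of test functions with Rayleigh quotient at most `1 / r`. In the spider with two
legs of length `r` and all other legs of length `1`, every leaf is within distance `r` of the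
centre `c`, which lies between any two leaves. A plane of boundary data contains a nonzero `f`
with `f(c) = 0`; taking for `h` the combination with weights `f(x) / r`, the inequality
`0 ≤ E(f - h)` says `E(f) ≥ (1 / r) ∑ f(x)²`.
-/

section Metric

open SimpleGraph

variable {V : Type*} {G : SimpleGraph V}

lemma exists_dist_eq_of_dist_eq_add (hG : G.Connected) {u v : V} {a b : ℕ}
    (huv : G.dist u v = a + b) : ∃ c, G.dist u c = a ∧ G.dist c v = b := by
  obtain ⟨p, hp⟩ := hG.exists_walk_length_eq_dist u v
  have hua : G.dist u (p.getVert a) ≤ a :=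
    (dist_le (p.take a)).trans ((p.take_length a).trans_le (min_le_left _ _))
  have hbv : G.dist (p.getVert a) v ≤ p.length - a :=
    (dist_le (p.drop a)).trans_eq (p.drop_length a)
  have htri : G.dist u v ≤ G.dist u (p.getVert a) + G.dist (p.getVert a) v := hG.dist_triangle
  exact ⟨p.getVert a, by omega, by omega⟩

lemma sub_le_dist_of_forall_adj (hG : G.Connected) {φ : V → ℤ}
    (hφ : ∀ a b, G.Adj a b → φ a - φ b ≤ 1) (x y : V) : φ x - φ y ≤ G.dist x y := by
  obtain ⟨w, hw⟩ := hG.exists_walk_length_eq_dist x y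
  rw [← hw]
  clear hw
  induction w with
  | nil => simp
  | cons hadj w ih =>
    have hstep := hφ _ _ hadj
    rw [Walk.length_cons]
    push_cast
    linarith

lemma existsUnique_adj_dist_add_one_eq (hG : G.IsTree) {u x : V} (hxu : x ≠ u) :
    ∃! y, G.Adj x y ∧ G.dist y u + 1 = G.dist x u := by
  obtain ⟨p, hp, hlen⟩ := hG.connected.exists_path_of_dist x u
  have hnil : ¬ p.Nil := Walk.not_nil_of_ne hxu
  have hcloser : ∀ y, G.Adj x y → G.dist y u + 1 = G.dist x u → y = p.snd := by
    intro y hxy hy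
    obtain ⟨q, hq⟩ := hG.connected.exists_walk_length_eq_dist y u
    have hpath : (q.cons hxy).IsPath :=
      Walk.isPath_of_length_eq_dist _ (by rw [Walk.length_cons, hq, hy])
    have heq : p = q.cons hxy :=
      congrArg Subtype.val ((hG.isAcyclic.subsingleton_path x u).elim ⟨p, hp⟩ ⟨_, hpath⟩)
    rw [heq, Walk.snd_cons]
  refine ⟨p.snd, ⟨p.adj_snd hnil, ?_⟩, fun y hy => hcloser y hy.1 hy.2⟩
  have htail : G.dist p.snd u ≤ p.tail.length := dist_le _
  have hlen_tail := Walk.length_tail_add_one hnil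
  have htri : G.dist x u ≤ G.dist x p.snd + G.dist p.snd u := hG.connected.dist_triangle
  rw [dist_eq_one_iff_adj.mpr (p.adj_snd hnil)] at htri
  omega

lemma mem_leavesFinset_of_forall_dist_le [Fintype V] (hG : G.IsTree) {u x : V} (hxu : x ≠ u)
    (hmax : ∀ y, G.dist y u ≤ G.dist x u) : x ∈ leavesFinset G := by
  obtain ⟨y, ⟨hxy, -⟩, huniq⟩ := existsUnique_adj_dist_add_one_eq hG hxu
  refine Finset.mem_filter.mpr ⟨Finset.mem_univ x, ?_⟩
  refine degree_eq_one_iff_existsUnique_adj.mpr ⟨y, hxy, fun z hxz => huniq z ⟨hxz, ?_⟩⟩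
  have hz := hmax z
  rcases hG.dist_eq_dist_add_one_of_adj u hxz with h | h <;>
    simp only [dist_comm (u := u)] at h <;> omega

/-- `c` is a hub of `S` if it lies on a geodesic between any two distinct points of `S`; in a
tree this says that the paths from `c` to the points of `S` are edge-disjoint. -/
def IsHub (G : SimpleGraph V) (c : V) (S : Finset V) : Prop :=
  (S : Set V).Pairwise fun x y => G.dist x y = G.dist c x + G.dist c y

/-- The Gromov product `(x | y)_c`, in a tree the length of the common part of the paths from `c`
to `x` and to `y`. -/
noncomputable def gromovProduct (G : SimpleGraph V) (c x y : V) : ℝ :=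
  ((G.dist c x : ℝ) + G.dist c y - G.dist x y) / 2

lemma gromovProduct_self (G : SimpleGraph V) (c x : V) : gromovProduct G c x x = G.dist c x := by
  simp [gromovProduct]

lemma gromovProduct_base (G : SimpleGraph V) (c x : V) : gromovProduct G c x c = 0 := by
  simp [gromovProduct, dist_comm]

lemma IsHub.gromovProduct_eq_zero {c : V} {S : Finset V} (hS : IsHub G c S) {x y : V}
    (hx : x ∈ S) (hy : y ∈ S) (hxy : x ≠ y) : gromovProduct G c x y = 0 := by
  rw [gromovProduct, hS hx hy hxy]
  push_cast
  ring

/-- The potential of charges `w x` placed at the points `x ∈ S` of a tree and grounded at `c`. -/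
noncomputable def groundedPotential (G : SimpleGraph V) (c : V) (S : Finset V) (w : V → ℝ) :
    V → ℝ :=
  ∑ x ∈ S, w x • gromovProduct G c x

lemma groundedPotential_base (G : SimpleGraph V) (c : V) (S : Finset V) (w : V → ℝ) :
    groundedPotential G c S w c = 0 := by
  simp [groundedPotential, gromovProduct_base]

lemma IsHub.groundedPotential_apply {c : V} {S : Finset V} (hS : IsHub G c S) (w : V → ℝ) {x : V}
    (hx : x ∈ S) :
    groundedPotential G c S w x = w x * G.dist c x := by
  rw [groundedPotential, Finset.sum_apply, Finset.sum_eq_single_of_mem x hx, Pi.smul_apply,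
    gromovProduct_self, smul_eq_mul]
  intro y hy hyx
  rw [Pi.smul_apply, hS.gromovProduct_eq_zero hy hx hyx, smul_zero]

end Metric

section Energy

open scoped Matrix

variable {V : Type*} [Fintype V] {G : SimpleGraph V}

lemma dirichletEnergy_eq_dotProduct (G : SimpleGraph V) (f : V → ℝ) :
    dirichletEnergy G f = f ⬝ᵥ G.lapMatrix ℝ *ᵥ f := by
  rw [← Matrix.toLinearMap₂'_apply', G.lapMatrix_toLinearMap₂' ℝ, dirichletEnergy]

lemma dirichletEnergy_nonneg (G : SimpleGraph V) (f : V → ℝ) : 0 ≤ dirichletEnergy G f := by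
  unfold dirichletEnergy
  positivity

lemma dirichletEnergy_sub (G : SimpleGraph V) (f g : V → ℝ) :
    dirichletEnergy G (f - g) =
      dirichletEnergy G f - 2 * (f ⬝ᵥ G.lapMatrix ℝ *ᵥ g) + dirichletEnergy G g := by
  have hsymm : g ⬝ᵥ G.lapMatrix ℝ *ᵥ f = f ⬝ᵥ G.lapMatrix ℝ *ᵥ g := by
    rw [Matrix.dotProduct_mulVec, ← Matrix.mulVec_transpose, G.isSymm_lapMatrix ℝ, dotProduct_comm]
  simp only [dirichletEnergy_eq_dotProduct, Matrix.mulVec_sub, dotProduct_sub, sub_dotProduct,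
    hsymm]
  ring

lemma sum_neighborFinset_dist_sub (hG : G.IsTree) {u x : V} (hxu : x ≠ u) :
    ∑ y ∈ G.neighborFinset x, ((G.dist x u : ℝ) - G.dist y u) = 2 - G.degree x := by
  obtain ⟨z, ⟨hxz, hz⟩, huniq⟩ := existsUnique_adj_dist_add_one_eq hG hxu
  have hterm : ∀ y ∈ G.neighborFinset x,
      (G.dist x u : ℝ) - G.dist y u = (if y = z then 2 else 0) - 1 := by
    intro y hy
    rw [SimpleGraph.mem_neighborFinset] at hy
    have hdist := hG.dist_eq_dist_add_one_of_adj u hy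
    simp only [SimpleGraph.dist_comm (u := u)] at hdist
    split_ifs with hyz
    · rw [hyz, ← hz]
      push_cast
      ring
    · have hfar := hdist.resolve_left fun h => hyz (huniq y ⟨hy, h.symm⟩)
      rw [hfar]
      push_cast
      ring
  rw [Finset.sum_congr rfl hterm, Finset.sum_sub_distrib, Finset.sum_ite_eq',
    if_pos ((G.mem_neighborFinset x z).mpr hxz)]
  simp

lemma lapMatrix_mulVec_dist (hG : G.IsTree) (u : V) :
    G.lapMatrix ℝ *ᵥ (fun x => (G.dist x u : ℝ)) =
      (fun x => 2 - (G.degree x : ℝ)) - (2 : ℝ) • Pi.single u 1 := by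
  ext x
  rw [SimpleGraph.lapMatrix_mulVec_apply]
  by_cases hxu : x = u
  · subst hxu
    have hone : ∀ y ∈ G.neighborFinset x, (G.dist y x : ℝ) = 1 := fun y hy => by
      rw [SimpleGraph.mem_neighborFinset] at hy
      rw [SimpleGraph.dist_eq_one_iff_adj.mpr hy.symm, Nat.cast_one]
    simp [Finset.sum_congr rfl hone]
  · have hsum := sum_neighborFinset_dist_sub hG hxu
    rw [Finset.sum_sub_distrib, Finset.sum_const, nsmul_eq_mul,
      SimpleGraph.card_neighborFinset_eq_degree] at hsum
    simpa [hxu] using hsum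

lemma lapMatrix_mulVec_gromovProduct (hG : G.IsTree) (c x : V) :
    G.lapMatrix ℝ *ᵥ gromovProduct G c x = Pi.single x 1 - Pi.single c 1 := by
  have hsplit : gromovProduct G c x = ((G.dist c x : ℝ) / 2) • (fun _ => (1 : ℝ)) +
      (1 / 2 : ℝ) • (fun y => (G.dist y c : ℝ)) - (1 / 2 : ℝ) • (fun y => (G.dist y x : ℝ)) := by
    ext y
    simp only [gromovProduct, Pi.add_apply, Pi.sub_apply, Pi.smul_apply, smul_eq_mul,
      G.dist_comm (u := c) (v := y), G.dist_comm (u := x) (v := y)]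
    ring
  rw [hsplit, Matrix.mulVec_sub, Matrix.mulVec_add, Matrix.mulVec_smul, Matrix.mulVec_smul,
    Matrix.mulVec_smul, SimpleGraph.lapMatrix_mulVec_const_eq_zero, lapMatrix_mulVec_dist hG,
    lapMatrix_mulVec_dist hG]
  module

variable {c : V} {S : Finset V}

lemma dotProduct_lapMatrix_mulVec_groundedPotential (hG : G.IsTree) (c : V) (S : Finset V)
    (f w : V → ℝ) :
    f ⬝ᵥ G.lapMatrix ℝ *ᵥ groundedPotential G c S w = ∑ x ∈ S, w x * (f x - f c) := by
  simp only [groundedPotential, Matrix.mulVec_sum, Matrix.mulVec_smul, dotProduct_sum,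
    dotProduct_smul, lapMatrix_mulVec_gromovProduct hG, dotProduct_sub, dotProduct_single,
    mul_one, smul_eq_mul]

lemma IsHub.dirichletEnergy_groundedPotential (hS : IsHub G c S) (hG : G.IsTree) (w : V → ℝ) :
    dirichletEnergy G (groundedPotential G c S w) = ∑ x ∈ S, w x ^ 2 * G.dist c x := by
  rw [dirichletEnergy_eq_dotProduct, dotProduct_lapMatrix_mulVec_groundedPotential hG,
    groundedPotential_base]
  refine Finset.sum_congr rfl fun x hx => ?_
  rw [hS.groundedPotential_apply w hx]
  ring

lemma IsHub.sum_sq_le_mul_dirichletEnergy (hS : IsHub G c S) (hG : G.IsTree) {r : ℝ} (hr : 0 < r)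
    (hdist : ∀ x ∈ S, (G.dist c x : ℝ) ≤ r) {f : V → ℝ} (hf : f c = 0) :
    ∑ x ∈ S, f x ^ 2 ≤ r * dirichletEnergy G f := by
  set h := groundedPotential G c S fun x => f x / r
  have hfh : f ⬝ᵥ G.lapMatrix ℝ *ᵥ h = (∑ x ∈ S, f x ^ 2) / r := by
    rw [dotProduct_lapMatrix_mulVec_groundedPotential hG, hf, Finset.sum_div]
    exact Finset.sum_congr rfl fun x _ => by ring
  have hh : dirichletEnergy G h ≤ (∑ x ∈ S, f x ^ 2) / r := by
    rw [hS.dirichletEnergy_groundedPotential hG, Finset.sum_div]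
    refine Finset.sum_le_sum fun x hx => ?_
    calc (f x / r) ^ 2 * G.dist c x ≤ (f x / r) ^ 2 * r := by gcongr; exact hdist x hx
      _ = f x ^ 2 / r := by field_simp
  have hsub : 0 ≤ dirichletEnergy G f - 2 * (f ⬝ᵥ G.lapMatrix ℝ *ᵥ h) + dirichletEnergy G h :=
    dirichletEnergy_sub G f h ▸ dirichletEnergy_nonneg G (f - h)
  have hdiv : (∑ x ∈ S, f x ^ 2) / r ≤ dirichletEnergy G f := by linarith
  rwa [div_le_iff₀' hr] at hdiv

end Energy

lemma exists_mem_apply_eq_zero_map_ne_zero {K M N : Type*} [Field K] [AddCommGroup M] [Module K M]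
    [AddCommGroup N] [Module K N] (R : M →ₗ[K] N) (φ : M →ₗ[K] K) {F : Submodule K M}
    (hF : 1 < Module.finrank K (F.map R)) : ∃ f ∈ F, φ f = 0 ∧ R f ≠ 0 := by
  by_contra! hker
  have hprop : ∀ f ∈ F, ∀ g ∈ F, φ g • R f = φ f • R g := by
    intro f hf g hg
    have hmem : φ g • f - φ f • g ∈ F := F.sub_mem (F.smul_mem _ hf) (F.smul_mem _ hg)
    have hzero := hker _ hmem (by simp [mul_comm])
    rwa [map_sub, map_smul, map_smul, sub_eq_zero] at hzero
  obtain ⟨g, hg, hφg⟩ : ∃ g ∈ F, φ g ≠ 0 := by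
    by_contra! hφ
    have hbot : F.map R = ⊥ :=
      LinearMap.le_ker_iff_map.mp fun f hf => hker f hf (hφ f hf)
    rw [hbot, finrank_bot] at hF
    omega
  refine hF.not_ge (finrank_le_one ⟨R g, Submodule.mem_map_of_mem hg⟩ ?_)
  rintro ⟨_, f, hf, rfl⟩
  refine ⟨φ f / φ g, Subtype.ext ?_⟩
  change (φ f / φ g) • R g = R f
  rw [div_eq_inv_mul, mul_smul, ← hprop f hf g hg, inv_smul_smul₀ hφg]

section SteklovBound

variable {V : Type*}

/-- Restriction of functions on the vertices to the boundary `B`. -/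
def boundaryRestriction (B : Finset V) : (V → ℝ) →ₗ[ℝ] ({v // v ∈ B} → ℝ) :=
  LinearMap.funLeft ℝ ℝ (fun x : {v // v ∈ B} => (x : V))

lemma sum_sq_pos_of_boundaryRestriction_ne_zero {B : Finset V} {f : V → ℝ}
    (hf : boundaryRestriction B f ≠ 0) : 0 < ∑ x ∈ B, f x ^ 2 := by
  obtain ⟨x, hx⟩ := Function.ne_iff.mp hf
  exact Finset.sum_pos' (fun _ _ => sq_nonneg _) ⟨x, x.2, sq_pos_of_ne_zero hx⟩

variable {G : SimpleGraph V} {B S : Finset V} {c : V}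

lemma IsHub.finrank_map_span_gromovProduct (hS : IsHub G c S) (hSB : S ⊆ B)
    (hpos : ∀ x ∈ S, 0 < G.dist c x) :
    Module.finrank ℝ ((Submodule.span ℝ (gromovProduct G c '' S)).map (boundaryRestriction B)) =
      S.card := by
  have hindep : LinearIndepOn ℝ (fun x => boundaryRestriction B (gromovProduct G c x)) S := by
    refine linearIndepOn_finset_iff.mpr fun w hw x hx => ?_
    have hx0 : groundedPotential G c S w x = 0 := by
      simpa [groundedPotential, boundaryRestriction] using congrFun hw ⟨x, hSB hx⟩
    rw [hS.groundedPotential_apply w hx] at hx0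
    exact (mul_eq_zero.mp hx0).resolve_right (Nat.cast_ne_zero.mpr (hpos x hx).ne')
  rw [Submodule.map_span, Set.image_image, Set.image_eq_range]
  exact (finrank_span_eq_card hindep).trans (Fintype.card_coe S)

variable [Fintype V] {k : ℕ} {t : ℝ}

/-- `t` bounds the Rayleigh quotient `E(f) / ∑ x ∈ B, f(x)²` on a space of functions whose boundary
values form a space of dimension `k`; the `k`-th Steklov eigenvalue is the infimum of such `t`. -/
def IsSteklovBound (G : SimpleGraph V) (B : Finset V) (k : ℕ) (t : ℝ) : Prop :=
  ∃ F : Submodule ℝ (V → ℝ), Module.finrank ℝ (F.map (boundaryRestriction B)) = k ∧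
    ∀ f ∈ F, dirichletEnergy G f ≤ t * ∑ x ∈ B, f x ^ 2

lemma steklovEig_eq_sInf (G : SimpleGraph V) (B : Finset V) (k : ℕ) :
    steklovEig G B k = sInf {t | IsSteklovBound G B k t} :=
  rfl

lemma IsSteklovBound.nonneg (ht : IsSteklovBound G B k t) (hk : k ≠ 0) : 0 ≤ t := by
  obtain ⟨F, hF, hle⟩ := ht
  obtain ⟨f, hf, hne⟩ : ∃ f ∈ F, boundaryRestriction B f ≠ 0 := by
    by_contra! hzero
    rw [LinearMap.le_ker_iff_map.mp hzero, finrank_bot] at hF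
    exact hk hF.symm
  exact nonneg_of_mul_nonneg_left ((dirichletEnergy_nonneg G f).trans (hle f hf))
    (sum_sq_pos_of_boundaryRestriction_ne_zero hne)

lemma IsSteklovBound.steklovEig_le (ht : IsSteklovBound G B k t) (hk : k ≠ 0) :
    steklovEig G B k ≤ t :=
  csInf_le ⟨0, fun _ (hs : IsSteklovBound G B k _) => hs.nonneg hk⟩ ht

lemma IsHub.isSteklovBound_card (hS : IsHub G c S) (hG : G.IsTree) (hSB : S ⊆ B) {r : ℝ}
    (hr : 0 < r) (hdist : ∀ x ∈ S, r ≤ G.dist c x) : IsSteklovBound G B S.card (1 / r) := by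
  refine ⟨_, hS.finrank_map_span_gromovProduct hSB
    fun x hx => Nat.cast_pos.mp (hr.trans_le (hdist x hx)), fun f hf => ?_⟩
  obtain ⟨w, rfl⟩ := (Submodule.mem_span_image_finset_iff_exists_fun' ℝ).mp hf
  change dirichletEnergy G (groundedPotential G c S w) ≤
    1 / r * ∑ x ∈ B, groundedPotential G c S w x ^ 2
  rw [hS.dirichletEnergy_groundedPotential hG, one_div, ← div_eq_inv_mul, le_div_iff₀ hr,
    Finset.sum_mul]
  calc ∑ x ∈ S, w x ^ 2 * G.dist c x * r
      ≤ ∑ x ∈ S, w x ^ 2 * G.dist c x * G.dist c x := by gcongr with x hx; exact hdist x hx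
    _ = ∑ x ∈ S, groundedPotential G c S w x ^ 2 :=
        Finset.sum_congr rfl fun x hx => by rw [hS.groundedPotential_apply w hx]; ring
    _ ≤ ∑ x ∈ B, groundedPotential G c S w x ^ 2 :=
        Finset.sum_le_sum_of_subset_of_nonneg hSB fun _ _ _ => sq_nonneg _

lemma IsHub.one_div_le_of_isSteklovBound (hB : IsHub G c B) (hG : G.IsTree) {r : ℝ} (hr : 0 < r)
    (hdist : ∀ x ∈ B, (G.dist c x : ℝ) ≤ r) (hk : 2 ≤ k) (ht : IsSteklovBound G B k t) :
    1 / r ≤ t := by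
  obtain ⟨F, hF, hle⟩ := ht
  obtain ⟨f, hf, hfc, hne⟩ :=
    exists_mem_apply_eq_zero_map_ne_zero (boundaryRestriction B) (LinearMap.proj c) (F := F)
      (by omega)
  refine le_of_mul_le_mul_right ?_ (sum_sq_pos_of_boundaryRestriction_ne_zero hne)
  calc 1 / r * ∑ x ∈ B, f x ^ 2
      ≤ dirichletEnergy G f := by
        rw [one_div, ← div_eq_inv_mul, div_le_iff₀' hr]
        exact hB.sum_sq_le_mul_dirichletEnergy hG hr hdist hfc
    _ ≤ t * ∑ x ∈ B, f x ^ 2 := hle f hf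

lemma isSteklovBound_two_of_diam (hG : G.IsTree) {r : ℕ} (hr : 1 ≤ r) (hdiam : G.diam = 2 * r) :
    IsSteklovBound G (leavesFinset G) 2 (1 / (r : ℝ)) := by
  have := hG.connected.nonempty
  obtain ⟨u, v, huv⟩ := G.exists_dist_eq_diam
  have hmax : ∀ x y, G.dist x y ≤ G.dist u v := fun x y =>
    huv ▸ SimpleGraph.dist_le_diam (SimpleGraph.connected_iff_ediam_ne_top.mp hG.connected)
  have hne : u ≠ v := by
    rintro rfl
    rw [SimpleGraph.dist_self] at huv
    omega
  obtain ⟨c, huc, hcv⟩ := exists_dist_eq_of_dist_eq_add (a := r) (b := r) hG.connected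
    (huv.trans (hdiam.trans (two_mul r)))
  rw [SimpleGraph.dist_comm] at huc
  have hhub : IsHub G c {u, v} := by
    rw [IsHub, Finset.coe_pair, Set.pairwise_pair, G.dist_comm (u := v)]
    omega
  have hleaves : {u, v} ⊆ leavesFinset G := by
    refine Finset.insert_subset (mem_leavesFinset_of_forall_dist_le hG hne (hmax · v))
      (Finset.singleton_subset_iff.mpr (mem_leavesFinset_of_forall_dist_le hG hne.symm fun y => ?_))
    exact (hmax y u).trans_eq G.dist_comm
  rw [← Finset.card_pair hne]
  refine hhub.isSteklovBound_card hG hleaves (Nat.cast_pos.mpr hr) ?_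
  simp [huc, hcv]

lemma steklovEig_two_le_of_diam (hG : G.IsTree) {r : ℕ} (hr : 1 ≤ r) (hdiam : G.diam = 2 * r) :
    steklovEig G (leavesFinset G) 2 ≤ 1 / (r : ℝ) :=
  (isSteklovBound_two_of_diam hG hr hdiam).steklovEig_le two_ne_zero

end SteklovBound

section ParentGraph

variable {V : Type*} {p : V → V} {c : V} {h : V → ℕ}

/-- The graph joining every vertex `x` to its parent `p x`. -/
def parentGraph (p : V → V) : SimpleGraph V :=
  SimpleGraph.fromRel fun x y => p x = y

/-- `h` is the depth in the tree rooted at `c` with parent map `p`. The root is its own parent. -/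
structure IsDepth (p : V → V) (c : V) (h : V → ℕ) : Prop where
  parent_root : p c = c
  depth_root : h c = 0
  depth_eq : ∀ x, x ≠ c → h x = h (p x) + 1

namespace IsDepth

lemma parentGraph_adj_parent (hp : IsDepth p c h) {x : V} (hx : x ≠ c) :
    (parentGraph p).Adj x (p x) := by
  refine (SimpleGraph.fromRel_adj _ _ _).mpr ⟨fun hpx => ?_, Or.inl rfl⟩
  have hdepth := hp.depth_eq x hx
  rw [← hpx] at hdepth
  omega

lemma exists_walk_length_eq (hp : IsDepth p c h) (x : V) :
    ∃ w : (parentGraph p).Walk c x, w.length = h x := by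
  induction hn : h x generalizing x with
  | zero =>
    have hxc : x = c := by
      by_contra hx
      have := hp.depth_eq x hx
      omega
    subst hxc
    exact ⟨SimpleGraph.Walk.nil, rfl⟩
  | succ n ih =>
    have hx : x ≠ c := by
      rintro rfl
      have := hp.depth_root
      omega
    obtain ⟨w, hw⟩ := ih (p x) (by have := hp.depth_eq x hx; omega)
    exact ⟨w.concat (hp.parentGraph_adj_parent hx).symm, by rw [SimpleGraph.Walk.length_concat, hw]⟩

lemma dist_root_le (hp : IsDepth p c h) (x : V) : (parentGraph p).dist c x ≤ h x := by
  obtain ⟨w, hw⟩ := hp.exists_walk_length_eq x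
  exact hw ▸ SimpleGraph.dist_le w

lemma parentGraph_connected (hp : IsDepth p c h) : (parentGraph p).Connected :=
  SimpleGraph.connected_iff_exists_forall_reachable _ |>.mpr
    ⟨c, fun x => (hp.exists_walk_length_eq x).elim fun w _ => ⟨w⟩⟩

lemma edgeSet_parentGraph_subset (hp : IsDepth p c h) :
    (parentGraph p).edgeSet ⊆ (fun x => s(x, p x)) '' {c}ᶜ := by
  have hchild : ∀ {x y}, x ≠ y → p x = y → x ∈ ({c}ᶜ : Set V) := by
    rintro x _ hne rfl rfl
    exact hne hp.parent_root.symm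
  intro e
  induction e with
  | _ x y =>
    rw [SimpleGraph.mem_edgeSet, parentGraph, SimpleGraph.fromRel_adj]
    rintro ⟨hne, hxy | hyx⟩
    · exact ⟨x, hchild hne hxy, congrArg (s(x, ·)) hxy⟩
    · exact ⟨y, hchild hne.symm hyx, (congrArg (s(y, ·)) hyx).trans Sym2.eq_swap⟩

lemma parentGraph_isTree [Finite V] (hp : IsDepth p c h) : (parentGraph p).IsTree := by
  have hconn := hp.parentGraph_connected
  refine SimpleGraph.isTree_iff_connected_and_card.mpr
    ⟨hconn, le_antisymm ?_ hconn.card_vert_le_card_edgeSet_add_one⟩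
  have hle : (parentGraph p).edgeSet.ncard ≤ ({c}ᶜ : Set V).ncard :=
    (Set.ncard_le_ncard hp.edgeSet_parentGraph_subset).trans (Set.ncard_image_le)
  have hcompl := Set.ncard_add_ncard_compl ({c} : Set V)
  rw [Set.ncard_singleton] at hcompl
  rw [Nat.card_coe_set_eq]
  omega

lemma depth_add_depth_le_dist (hp : IsDepth p c h) {ι : Type*} {leg : V → ι}
    (hleg : ∀ x, p x ≠ c → leg (p x) = leg x) {x y : V} (hxy : leg x ≠ leg y) :
    h x + h y ≤ (parentGraph p).dist x y := by
  -- The depth, counted negatively off the leg of `x`, varies by at most `1` along every edge.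
  set φ : V → ℤ := fun z => if leg z = leg x then h z else -h z with hφ
  have hparent : ∀ z, z ≠ c → |φ z - φ (p z)| ≤ 1 := by
    intro z hz
    have hdepth := hp.depth_eq z hz
    by_cases hpz : p z = c
    · have hroot : h (p z) = 0 := hpz ▸ hp.depth_root
      simp only [hφ, hdepth, hroot]
      split_ifs <;> simp
    · simp only [hφ, hleg z hpz, hdepth]
      split_ifs <;> simp
  have hadj : ∀ a b, (parentGraph p).Adj a b → φ a - φ b ≤ 1 := by
    intro a b hab
    obtain ⟨hne, rfl | rfl⟩ := (SimpleGraph.fromRel_adj _ _ _).mp hab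
    · exact (abs_le.mp (hparent a fun ha => hne (by rw [ha, hp.parent_root]))).2
    · have := (abs_le.mp (hparent b fun hb => hne (by rw [hb, hp.parent_root]))).1
      linarith
  have hdist := sub_le_dist_of_forall_adj hp.parentGraph_connected hadj x y
  simp only [hφ, if_true, if_neg hxy.symm] at hdist
  omega

lemma isHub_parentGraph (hp : IsDepth p c h) {ι : Type*} {leg : V → ι}
    (hleg : ∀ x, p x ≠ c → leg (p x) = leg x) {S : Finset V} (hS : (S : Set V).InjOn leg) :
    IsHub (parentGraph p) c S := by
  intro x hx y hy hxy
  refine le_antisymm ?_ ((add_le_add (hp.dist_root_le x) (hp.dist_root_le y)).trans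
    (hp.depth_add_depth_le_dist hleg (hS.ne hx hy hxy)))
  rw [SimpleGraph.dist_comm (u := c) (v := x)]
  exact hp.parentGraph_connected.dist_triangle

end IsDepth

end ParentGraph

section Spider

variable {r n : ℕ}

/-- The parent map of `spider r n`. On the two long legs it lowers the index by `2`; the truncated
subtraction sends `0`, `1` and `2` to the centre `0`. -/
def spiderParent (r : ℕ) (x : Fin n) : Fin n :=
  ⟨if x.1 ≤ 2 * r then x.1 - 2 else 0, by split_ifs <;> omega⟩

/-- The spider on `n` vertices with centre `0`, two legs `0, 1, 3, …, 2r - 1` and `0, 2, 4, …, 2r`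
of length `r`, and a leg of length `1` for every vertex beyond `2r`. -/
def spider (r n : ℕ) : SimpleGraph (Fin n) :=
  parentGraph (spiderParent r)

/-- The distance from the centre in `spider r n`. -/
def spiderDepth (r : ℕ) (x : Fin n) : ℕ :=
  if x.1 ≤ 2 * r then (x.1 + 1) / 2 else 1

/-- A label for the leg of `spider r n` containing a vertex. -/
def spiderLeg (r : ℕ) (x : Fin n) : ℕ :=
  if x.1 ≤ 2 * r then x.1 % 2 else x.1

lemma isDepth_spiderDepth [NeZero n] (r : ℕ) :
    IsDepth (spiderParent r) (0 : Fin n) (spiderDepth r) where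
  parent_root := by simp [spiderParent]
  depth_root := by simp [spiderDepth]
  depth_eq x hx := by
    rw [Ne, Fin.ext_iff, Fin.val_zero] at hx
    simp only [spiderDepth, spiderParent]
    split_ifs <;> omega

lemma spiderLeg_spiderParent [NeZero n] (x : Fin n) (hx : spiderParent r x ≠ 0) :
    spiderLeg r (spiderParent r x) = spiderLeg r x := by
  rw [Ne, Fin.ext_iff, Fin.val_zero] at hx
  simp only [spiderLeg, spiderParent] at hx ⊢
  split_ifs at hx ⊢ <;> omega

lemma spider_isTree (r n : ℕ) [NeZero n] : (spider r n).IsTree :=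
  (isDepth_spiderDepth r).parentGraph_isTree

lemma spiderDepth_le (hr : 1 ≤ r) (x : Fin n) : spiderDepth r x ≤ r := by
  unfold spiderDepth
  split_ifs <;> omega

lemma spider_dist_zero_le [NeZero n] (hr : 1 ≤ r) (x : Fin n) : (spider r n).dist 0 x ≤ r :=
  ((isDepth_spiderDepth r).dist_root_le x).trans (spiderDepth_le hr x)

lemma spider_diam [NeZero n] (hr : 1 ≤ r) (hn : 2 * r + 1 ≤ n) : (spider r n).diam = 2 * r := by
  have hconn := (spider_isTree r n).connected
  refine le_antisymm ?_ ?_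
  · obtain ⟨u, v, huv⟩ := (spider r n).exists_dist_eq_diam
    have htri : (spider r n).dist u v ≤ (spider r n).dist u 0 + (spider r n).dist 0 v :=
      hconn.dist_triangle
    have hu := spider_dist_zero_le hr u
    have hv := spider_dist_zero_le hr v
    rw [SimpleGraph.dist_comm] at hu
    omega
  · set u : Fin n := ⟨2 * r - 1, by omega⟩
    set v : Fin n := ⟨2 * r, by omega⟩
    have hleg : spiderLeg r u ≠ spiderLeg r v := by
      simp only [spiderLeg, u, v]
      split_ifs <;> omega
    calc 2 * r = spiderDepth r u + spiderDepth r v := by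
          simp only [spiderDepth, u, v]
          split_ifs <;> omega
      _ ≤ (spider r n).dist u v :=
          (isDepth_spiderDepth r).depth_add_depth_le_dist spiderLeg_spiderParent hleg
      _ ≤ (spider r n).diam :=
          SimpleGraph.dist_le_diam (SimpleGraph.connected_iff_ediam_ne_top.mp hconn)

lemma spider_adj_of_spiderParent_eq {x y : Fin n} (hne : x ≠ y) (h : spiderParent r x = y) :
    (spider r n).Adj x y :=
  (SimpleGraph.fromRel_adj _ _ _).mpr ⟨hne, Or.inl h⟩

lemma two_mul_le_of_mem_leavesFinset_spider (hn : 2 * r + 1 ≤ n) {x : Fin n}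
    (hx : x ∈ leavesFinset (spider r n)) : 2 * r ≤ x.1 + 1 := by
  by_contra! hlt
  have huniq : ∀ {y z}, (spider r n).Adj x y → (spider r n).Adj x z → y = z :=
    (SimpleGraph.degree_eq_one_iff_existsUnique_adj.mp (Finset.mem_filter.mp hx).2).unique
  set child : Fin n := ⟨x.1 + 2, by omega⟩ with hchild
  have hadj_child : (spider r n).Adj x child := by
    refine (spider_adj_of_spiderParent_eq ?_ ?_).symm <;>
      simp only [hchild, spiderParent, Ne, Fin.ext_iff] <;> grind
  by_cases hx0 : x.1 = 0
  · have hadj_one : (spider r n).Adj x ⟨1, by omega⟩ := by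
      refine (spider_adj_of_spiderParent_eq ?_ ?_).symm <;>
        simp only [spiderParent, Ne, Fin.ext_iff] <;> grind
    have := Fin.ext_iff.mp (huniq hadj_child hadj_one)
    simp only [hchild] at this
    omega
  · have hadj_parent : (spider r n).Adj x (spiderParent r x) := by
      refine spider_adj_of_spiderParent_eq ?_ rfl
      simp only [spiderParent, Ne, Fin.ext_iff]
      grind
    have := Fin.ext_iff.mp (huniq hadj_child hadj_parent)
    simp only [hchild, spiderParent] at this
    grind

lemma isHub_leavesFinset_spider [NeZero n] (hn : 2 * r + 1 ≤ n) :
    IsHub (spider r n) 0 (leavesFinset (spider r n)) := by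
  refine (isDepth_spiderDepth r).isHub_parentGraph spiderLeg_spiderParent fun x hx y hy hxy => ?_
  have hxr := two_mul_le_of_mem_leavesFinset_spider hn hx
  have hyr := two_mul_le_of_mem_leavesFinset_spider hn hy
  refine Fin.ext ?_
  simp only [spiderLeg] at hxy
  split_ifs at hxy <;> omega

lemma steklovEig_two_spider [NeZero n] (hr : 1 ≤ r) (hn : 2 * r + 1 ≤ n) :
    steklovEig (spider r n) (leavesFinset (spider r n)) 2 = 1 / (r : ℝ) := by
  have hG := spider_isTree r n
  have hbound := isSteklovBound_two_of_diam hG hr (spider_diam hr hn)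
  refine le_antisymm (hbound.steklovEig_le two_ne_zero) ?_
  rw [steklovEig_eq_sInf]
  exact le_csInf ⟨_, hbound⟩ fun t ht =>
    (isHub_leavesFinset_spider hn).one_div_le_of_isSteklovBound hG (Nat.cast_pos.mpr hr)
      (fun x _ => Nat.cast_le.mpr (spider_dist_zero_le hr x)) le_rfl ht

end Spider

/-- Let `D = 2r` be an even integer with `r ≥ 1` and let `n ≥ D + 1` be an
integer. Then `σ̃_{2,max}(D,n) = 2/D = 1/r`. -/
theorem stmt6 (D r n : ℕ) (hr : 1 ≤ r) (hD : D = 2 * r) (hn : D + 1 ≤ n) :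
    sigmaTildeMax D n = 2 / (D : ℝ) ∧ sigmaTildeMax D n = 1 / (r : ℝ) := by
  subst hD
  have : NeZero n := ⟨by omega⟩
  have hmax : sigmaTildeMax (2 * r) n = 1 / (r : ℝ) := by
    refine IsGreatest.csSup_eq
      ⟨⟨spider r n, spider_isTree r n, spider_diam hr hn, (steklovEig_two_spider hr hn).symm⟩, ?_⟩
    rintro _ ⟨G, hG, hdiam, rfl⟩
    exact steklovEig_two_le_of_diam hG hr hdiam
  refine ⟨?_, hmax⟩
  rw [hmax]
  push_cast
  field_simp
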